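/- (Expected discounted horizon in the job search model) Suppose β : Z → [0,∞) is bounded and continuous, Q is a Feller Markov kernel on Z, and there exists n with m_n < 1 (equivalently r(L_β) < 1). Then K(z) := Σ_{t=0}^∞ E_z[∏_{i=0}^{t-1} β(Z_i)] converges for every z ∈ Z, the function K is bounded and continuous on Z, and sup_z K(z) ≤ Σ_{t=0}^∞ m_t < ∞. -/

import Mathlib

open MeasureTheory ProbabilityTheory Filter Topology BoundedContinuousFunction

/-- `expProd Q β n z` is the expectation `E_z[∏_{t=0}^{n-1} β(Z_t)]` of the product of
discount factors along the Markov chain generated by the kernel `Q` and started at `z`,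
encoded by the canonical iterated-integral recursion (the empty product is `1`). -/
noncomputable def expProd {Z : Type*} [MeasurableSpace Z] (Q : ProbabilityTheory.Kernel Z Z)
    (β : Z → ℝ) : ℕ → Z → ℝ
  | 0 => fun _ => 1
  | n + 1 => fun z => β z * ∫ z', expProd Q β n z' ∂(Q z)

/-- `mSup Q β n = sup_{z ∈ Z} E_z[∏_{t=0}^{n-1} β(Z_t)]`. -/
noncomputable def mSup {Z : Type*} [MeasurableSpace Z] (Q : ProbabilityTheory.Kernel Z Z)
    (β : Z → ℝ) (n : ℕ) : ℝ :=
  ⨆ z, expProd Q β n z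

lemma expProd_aux {Z : Type*} [MetricSpace Z] [MeasurableSpace Z]
    [BorelSpace Z]
    (Q : ProbabilityTheory.Kernel Z Z) [IsMarkovKernel Q]
    (β : Z → ℝ) (hβc : Continuous β) (hβ0 : ∀ z, 0 ≤ β z) (hβb : ∃ C, ∀ z, β z ≤ C)
    (hFeller : ∀ v : Z →ᵇ ℝ, Continuous fun z => ∫ z', v z' ∂(Q z)) (n : ℕ) :
    Continuous (expProd Q β n) ∧ (∀ z, 0 ≤ expProd Q β n z) ∧
      ∃ C, ∀ z, expProd Q β n z ≤ C := by
  induction n with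
  | zero => exact ⟨continuous_const, fun _ => zero_le_one, 1, fun _ => le_rfl⟩
  | succ n ih =>
    obtain ⟨hc, h0, D, hD⟩ := ih
    obtain ⟨C, hC⟩ := hβb
    refine ⟨?_, ?_, C * D, ?_⟩
    · have := hFeller (BoundedContinuousFunction.ofNormedAddCommGroup (expProd Q β n) hc D
        (fun z => by rw [Real.norm_of_nonneg (h0 z)]; exact hD z))
      exact hβc.mul this
    · intro z
      exact mul_nonneg (hβ0 z) (integral_nonneg h0)
    · intro z
      have hi : ∫ z', expProd Q β n z' ∂(Q z) ≤ D := by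
        have hint : Integrable (expProd Q β n) (Q z) :=
          Integrable.of_bound hc.aestronglyMeasurable D
            (ae_of_all _ fun z => by rw [Real.norm_of_nonneg (h0 z)]; exact hD z)
        calc _ ≤ ∫ z', D ∂(Q z) := integral_mono hint (integrable_const D) hD
          _ = D := by simp
      exact mul_le_mul (hC z) hi (integral_nonneg h0) ((hβ0 z).trans (hC z))

/-- **The expected discounted horizon in the job search model.**
If `β` is bounded, nonnegative and continuous, `Q` is a Feller Markov kernel, and
`m_n < 1` for some `n` (equivalently `r(L_β) < 1`), then
`K(z) := Σ_{t=0}^∞ E_z[∏_{i<t} β(Z_i)]` converges for every `z`, `K` is bounded and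
continuous, and `sup_z K(z) ≤ Σ_{t=0}^∞ m_t < ∞`. -/
theorem expected_discounted_horizon {Z : Type*} [MetricSpace Z] [MeasurableSpace Z]
    [BorelSpace Z] [Nonempty Z]
    (Q : ProbabilityTheory.Kernel Z Z) [IsMarkovKernel Q]
    (β : Z → ℝ) (hβc : Continuous β) (hβ0 : ∀ z, 0 ≤ β z) (hβb : ∃ C, ∀ z, β z ≤ C)
    -- `Q` is Feller.
    (hFeller : ∀ v : Z →ᵇ ℝ, Continuous fun z => ∫ z', v z' ∂(Q z))
    (hcon : ∃ n : ℕ, mSup Q β n < 1) :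
    (∀ z : Z, Summable (fun t : ℕ => expProd Q β t z)) ∧
      Continuous (fun z => ∑' t : ℕ, expProd Q β t z) ∧
      (∃ M : ℝ, ∀ z, (∑' t : ℕ, expProd Q β t z) ≤ M) ∧
      Summable (fun t : ℕ => mSup Q β t) ∧
      ∀ z : Z, (∑' t : ℕ, expProd Q β t z) ≤ ∑' t : ℕ, mSup Q β t := by
  have aux := expProd_aux Q β hβc hβ0 hβb hFeller
  have hbdd : ∀ n, BddAbove (Set.range (expProd Q β n)) := fun n => by
    obtain ⟨C, hC⟩ := (aux n).2.2
    exact ⟨C, by rintro _ ⟨z, rfl⟩; exact hC z⟩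
  have hle : ∀ n z, expProd Q β n z ≤ mSup Q β n := fun n z => le_ciSup (hbdd n) z
  have hm0 : ∀ n, 0 ≤ mSup Q β n := fun n =>
    ((aux n).2.1 (Classical.arbitrary Z)).trans (hle n _)
  have hint : ∀ n z, Integrable (expProd Q β n) (Q z) := fun n z =>
    Integrable.of_bound (aux n).1.aestronglyMeasurable (mSup Q β n)
      (ae_of_all _ fun z => by rw [Real.norm_of_nonneg ((aux n).2.1 z)]; exact hle n z)
  have hsub : ∀ n k z, expProd Q β (k + n) z ≤ mSup Q β n * expProd Q β k z := by
    intro n k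
    induction k with
    | zero => intro z; simpa [expProd] using hle n z
    | succ k ih =>
      intro z
      rw [Nat.add_right_comm]
      have h1 : ∫ z', expProd Q β (k + n) z' ∂(Q z)
          ≤ mSup Q β n * ∫ z', expProd Q β k z' ∂(Q z) := by
        rw [← integral_const_mul]
        exact integral_mono (hint _ z) ((hint _ z).const_mul _) ih
      calc β z * ∫ z', expProd Q β (k + n) z' ∂(Q z)
          ≤ β z * (mSup Q β n * ∫ z', expProd Q β k z' ∂(Q z)) :=
            mul_le_mul_of_nonneg_left h1 (hβ0 z)
        _ = mSup Q β n * (β z * ∫ z', expProd Q β k z' ∂(Q z)) := by ring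
  have hmsub : ∀ n k, mSup Q β (n + k) ≤ mSup Q β n * mSup Q β k := fun n k =>
    ciSup_le fun z => by
      rw [add_comm n k]
      exact (hsub n k z).trans (mul_le_mul_of_nonneg_left (hle k z) (hm0 n))
  obtain ⟨n, hn⟩ := hcon
  have hS : Summable (fun t : ℕ => mSup Q β t) := by
    refine summable_of_sum_range_le (c := (∑ t ∈ Finset.range n, mSup Q β t) / (1 - mSup Q β n))
      hm0 fun N => ?_
    rw [le_div_iff₀ (by linarith)]
    have h1 : ∑ t ∈ Finset.range N, mSup Q β t ≤ ∑ t ∈ Finset.range (n + N), mSup Q β t :=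
      Finset.sum_le_sum_of_subset_of_nonneg (Finset.range_mono (by omega)) fun i _ _ => hm0 i
    rw [Finset.sum_range_add] at h1
    have h2 : ∑ t ∈ Finset.range N, mSup Q β (n + t)
        ≤ mSup Q β n * ∑ t ∈ Finset.range N, mSup Q β t := by
      rw [Finset.mul_sum]
      exact Finset.sum_le_sum fun i _ => hmsub n i
    linarith
  have hsum : ∀ z : Z, Summable (fun t : ℕ => expProd Q β t z) := fun z =>
    Summable.of_nonneg_of_le (fun t => (aux t).2.1 z) (fun t => hle t z) hS
  have hfin : ∀ z : Z, (∑' t : ℕ, expProd Q β t z) ≤ ∑' t : ℕ, mSup Q β t := fun z =>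
    (hsum z).tsum_le_tsum (fun t => hle t z) hS
  refine ⟨hsum, ?_, ⟨_, hfin⟩, hS, hfin⟩
  exact continuous_tsum (fun t => (aux t).1) hS fun t z => by
    rw [Real.norm_of_nonneg ((aux t).2.1 z)]; exact hle t z
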